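/- Let R be a φ-ring. Then R is a φ-IF ring if and only if R/Nil(R) is a field. -/

import Mathlib

open CategoryTheory

universe u

/-- A commutative ring is a `φ`-ring if its nilradical is a divided prime ideal. -/
def IsPhiRing (R : Type u) [CommRing R] : Prop :=
  (nilradical R).IsPrime ∧ ∀ x : R, x ∉ nilradical R → nilradical R ≤ Ideal.span {x}

/-- A ring is nonnil-coherent if every finitely generated nonnil ideal is
finitely presented as a module. -/
def IsNonnilCoherent (R : Type u) [CommRing R] : Prop :=
  ∀ I : Ideal R, I.FG → ¬ I ≤ nilradical R → Module.FinitePresentation R I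

/-- A module is φ-torsion if every element is annihilated by a nonnil ideal. -/
def IsPhiTorsion (R : Type u) [CommRing R] (T : Type u) [AddCommGroup T] [Module R T] : Prop :=
  ∀ t : T, ∃ I : Ideal R, ¬ I ≤ nilradical R ∧ ∀ a ∈ I, a • t = 0

/-- A module `M` is φ-flat if `Tor₁ᴿ(T, M) = 0` for every φ-torsion module `T`. -/
def IsPhiFlat (R : Type u) [CommRing R] (M : Type u) [AddCommGroup M] [Module R M] : Prop :=
  ∀ (T : Type u) [AddCommGroup T] [Module R T], IsPhiTorsion R T →
    Subsingleton (((Tor (ModuleCat.{u} R) 1).obj (ModuleCat.of R T)).obj (ModuleCat.of R M))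

/-- A module `M` is nonnil-injective if `Ext¹ᴿ(T, M) = 0` for every φ-torsion module `T`. -/
def IsNonnilInjective (R : Type u) [CommRing R] (M : Type u) [AddCommGroup M] [Module R M] :
    Prop :=
  ∀ (T : Type u) [AddCommGroup T] [Module R T], IsPhiTorsion R T →
    Subsingleton (((Ext R (ModuleCat.{u} R) 1).obj (Opposite.op (ModuleCat.of R T))).obj
      (ModuleCat.of R M))

/-- A module `M` is nonnil-FP-injective if `Ext¹ᴿ(T, M) = 0` for every finitely
presented φ-torsion module `T`. -/
def IsNonnilFPInjective (R : Type u) [CommRing R] (M : Type u) [AddCommGroup M] [Module R M] :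
    Prop :=
  ∀ (T : Type u) [AddCommGroup T] [Module R T], Module.FinitePresentation R T →
    IsPhiTorsion R T →
    Subsingleton (((Ext R (ModuleCat.{u} R) 1).obj (Opposite.op (ModuleCat.of R T))).obj
      (ModuleCat.of R M))

/-!
If `R/Nil(R)` is a field, every element outside `Nil(R)` is a unit, so φ-torsion modules vanish and
every module is φ-flat.

Conversely, test the φ-IF condition on the character module `M` of `R/Nil(R)`. As `Nil(R)` is a
divided prime, `Nil(R) = x Nil(R)` for every `x ∉ Nil(R)`; hence `Nil(R) Y = Nil(R) K` whenever
`Y/K` is φ-torsion, so `K → Y` stays injective modulo `Nil(R)`, and dualizing shows that `M` is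
nonnil-injective. Being φ-flat, `M` satisfies `Tor₁(R/x, M) = 0` for `x ∉ Nil(R)`, so that `x m = 0`
forces `m ∈ ann(x) M ⊆ Nil(R) M = 0`. Thus `x` acts injectively on `M`, hence surjectively on
`R/Nil(R)`, which makes it a unit there.
-/

open scoped TensorProduct

section Exact

open Function

lemma exact_comp_iff_injective {A B C D F : Type*} [AddGroup C] [AddMonoid D] [FunLike F C D]
    [AddMonoidHomClass F C D] {f : A → B} {p : B → C} {i : F} (hex : Exact f p)
    (hp : Surjective p) : Exact f (i ∘ p) ↔ Injective i := by
  refine ⟨fun h ↦ (injective_iff_map_eq_zero i).2 fun c hc ↦ ?_,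
    fun hi b ↦ by rw [comp_apply, map_eq_zero_iff i hi, hex b]⟩
  obtain ⟨b, rfl⟩ := hp c
  exact (hex b).2 ((h b).1 hc)

lemma exact_comp_iff_surjective {A B C D : Type*} [Zero D] {s : A → B} {i : B → C} {g : C → D}
    (hex : Exact i g) (hi : Injective i) : Exact (i ∘ s) g ↔ Surjective s := by
  refine ⟨fun h b ↦ ?_, fun hs c ↦ by rw [hex c, hs.range_comp]⟩
  obtain ⟨a, ha⟩ := (h (i b)).1 (hex.apply_apply_eq_zero b)
  exact ⟨a, hi ha⟩

end Exact

section LinearAlgebra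

variable {R : Type*} [CommRing R] {M N : Type*} [AddCommGroup M] [Module R M]
  [AddCommGroup N] [Module R N]

lemma lTensor_quotient_injective_iff (I : Ideal R) (f : N →ₗ[R] M) :
    Function.Injective (f.lTensor (R ⧸ I)) ↔
      (I • ⊤ : Submodule R M).comap f ≤ (I • ⊤ : Submodule R N) := by
  have map_mk_eq_zero_iff (n : N) : f.lTensor (R ⧸ I)
      ((TensorProduct.quotTensorEquivQuotSMul N I).symm (Submodule.Quotient.mk n)) = 0 ↔
        f n ∈ (I • ⊤ : Submodule R M) := by
    rw [TensorProduct.quotTensorEquivQuotSMul_symm_mk, LinearMap.lTensor_tmul,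
      ← TensorProduct.quotTensorEquivQuotSMul_symm_mk, LinearEquiv.map_eq_zero_iff,
      Submodule.Quotient.mk_eq_zero]
  rw [injective_iff_map_eq_zero,
    (TensorProduct.quotTensorEquivQuotSMul N I).toEquiv.forall_congr_left,
    (Submodule.Quotient.mk_surjective _).forall]
  simp [-TensorProduct.quotTensorEquivQuotSMul_symm_mk, map_mk_eq_zero_iff, SetLike.le_def]

lemma mem_annihilator_smul_top_of_flat [Module.Flat R M] {x : R} {m : M} (hm : x • m = 0) :
    m ∈ ((Ideal.span {x}).annihilator • ⊤ : Submodule R M) := by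
  obtain ⟨k, a, y, hy, ha⟩ := Module.Flat.isTrivialRelation_of_sum_smul_eq_zero
    (f := fun _ : Unit ↦ x) (x := fun _ ↦ m) (by simpa using hm)
  rw [show m = _ from hy ()]
  refine sum_mem fun j _ ↦ Submodule.smul_mem_smul ?_ trivial
  rw [Submodule.mem_annihilator_span_singleton]
  simpa [mul_comm] using ha j

lemma annihilator_le_annihilator_characterModule :
    Module.annihilator R M ≤ Module.annihilator R (CharacterModule M) := fun r hr ↦
  Module.mem_annihilator.2 fun c ↦ DFunLike.ext _ _ fun m ↦ by
    rw [CharacterModule.smul_apply, Module.mem_annihilator.1 hr m, map_zero]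
    rfl

end LinearAlgebra

section DerivedFunctors

variable {R : Type u} [CommRing R]

lemma subsingleton_tor_succ_iff (T : ModuleCat.{u} R) {M : ModuleCat.{u} R}
    (P : ProjectiveResolution M) (n : ℕ) :
    Subsingleton (((Tor (ModuleCat.{u} R) (n + 1)).obj T).obj M) ↔
      Function.Exact ((P.complex.d (n + 2) (n + 1)).hom.lTensor T)
        ((P.complex.d (n + 1) n).hom.lTensor T) := by
  let F := (MonoidalCategory.tensoringLeft (ModuleCat.{u} R)).obj T
  rw [← ModuleCat.isZero_iff_subsingleton, Tor_obj, (P.isoLeftDerivedObj F (n + 1)).isZero_iff,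
    HomologicalComplex.homologyFunctor_obj, ← HomologicalComplex.exactAt_iff_isZero_homology,
    HomologicalComplex.exactAt_iff' _ (n + 2) (n + 1) n (by simp) (by simp),
    ShortComplex.ShortExact.moduleCat_exact_iff_function_exact]
  rfl

lemma subsingleton_ext_succ_iff {T : ModuleCat.{u} R} (P : ProjectiveResolution T)
    (M : ModuleCat.{u} R) (n : ℕ) :
    Subsingleton (((Ext R (ModuleCat.{u} R) (n + 1)).obj (Opposite.op T)).obj M) ↔
      Function.Exact ((P.complex.d (n + 1) n).hom.lcomp R M)
        ((P.complex.d (n + 2) (n + 1)).hom.lcomp R M) := by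
  rw [← ModuleCat.isZero_iff_subsingleton, (P.isoExt (n + 1) M).isZero_iff,
    ← HomologicalComplex.exactAt_iff_isZero_homology,
    HomologicalComplex.exactAt_iff' _ n (n + 1) (n + 2) (by simp) (by simp),
    ShortComplex.ShortExact.moduleCat_exact_iff_function_exact]
  exact ModuleCat.homEquiv.forall_congr fun _ ↦ iff_congr ModuleCat.hom_ext_iff
    (ModuleCat.homEquiv.exists_congr fun _ ↦ ModuleCat.hom_ext_iff)

lemma subsingleton_tor_succ_of_subsingleton (T M : ModuleCat.{u} R) [Subsingleton T] (n : ℕ) :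
    Subsingleton (((Tor (ModuleCat.{u} R) (n + 1)).obj T).obj M) :=
  (subsingleton_tor_succ_iff T (projectiveResolution M) n).2 fun _ ↦
    iff_of_true (Subsingleton.elim _ _) ⟨0, Subsingleton.elim _ _⟩

variable {X : ModuleCat.{u} R} (P : ProjectiveResolution X)

/-- The first syzygy `ker (P₀ → X)` of a module `X` with respect to a projective resolution `P`. -/
noncomputable abbrev firstSyzygy : Submodule R (P.complex.X 0) := LinearMap.ker (P.π.f 0).hom

lemma exact_d_augmentation : Function.Exact (P.complex.d 1 0).hom (P.π.f 0).hom :=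
  (ShortComplex.ShortExact.moduleCat_exact_iff_function_exact _).1 P.exact₀

/-- The differential `P₁ → P₀` of a projective resolution, with codomain restricted to the first
syzygy. -/
noncomputable def toFirstSyzygy : P.complex.X 1 →ₗ[R] firstSyzygy P :=
  (P.complex.d 1 0).hom.codRestrict _ (exact_d_augmentation P).apply_apply_eq_zero

lemma subtype_comp_toFirstSyzygy :
    (firstSyzygy P).subtype ∘ₗ toFirstSyzygy P = (P.complex.d 1 0).hom :=
  rfl

lemma toFirstSyzygy_surjective : Function.Surjective (toFirstSyzygy P) := fun ⟨y, hy⟩ ↦ by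
  obtain ⟨x, rfl⟩ := (exact_d_augmentation P y).1 hy
  exact ⟨x, rfl⟩

lemma exact_d_toFirstSyzygy : Function.Exact (P.complex.d 2 1).hom (toFirstSyzygy P) := fun x ↦
  Subtype.ext_iff.trans
    ((ShortComplex.ShortExact.moduleCat_exact_iff_function_exact _).1 (P.exact_succ 0) x)

lemma subsingleton_tor_one_iff_lTensor_injective (T : ModuleCat.{u} R) :
    Subsingleton (((Tor (ModuleCat.{u} R) 1).obj T).obj X) ↔
      Function.Injective ((firstSyzygy P).subtype.lTensor T) := by
  rw [subsingleton_tor_succ_iff T P 0, zero_add, ← subtype_comp_toFirstSyzygy,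
    LinearMap.lTensor_comp, LinearMap.coe_comp]
  exact exact_comp_iff_injective
    (lTensor_exact T (exact_d_toFirstSyzygy P) (toFirstSyzygy_surjective P))
    (LinearMap.lTensor_surjective T (toFirstSyzygy_surjective P))

lemma subsingleton_ext_one_iff_lcomp_surjective (M : ModuleCat.{u} R) :
    Subsingleton (((Ext R (ModuleCat.{u} R) 1).obj (Opposite.op X)).obj M) ↔
      Function.Surjective ((firstSyzygy P).subtype.lcomp R M) := by
  rw [subsingleton_ext_succ_iff P M 0, zero_add, ← subtype_comp_toFirstSyzygy]
  exact exact_comp_iff_surjective (s := (firstSyzygy P).subtype.lcomp R M)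
    (LinearMap.exact_lcomp_of_exact_of_surjective M (exact_d_toFirstSyzygy P)
      (toFirstSyzygy_surjective P))
    (LinearMap.lcomp_injective_of_surjective _ (toFirstSyzygy_surjective P))

lemma mem_annihilator_smul_top_of_subsingleton_tor {M : ModuleCat.{u} R} {x : R} {m : M}
    (h : Subsingleton (((Tor (ModuleCat.{u} R) 1).obj (ModuleCat.of R (R ⧸ Ideal.span {x}))).obj M))
    (hm : x • m = 0) : m ∈ ((Ideal.span {x}).annihilator • ⊤ : Submodule R M) := by
  let P := projectiveResolution M
  let π : P.complex.X 0 →ₗ[R] M := (P.π.f 0).hom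
  have : Module.Projective R (P.complex.X 0) :=
    (IsProjective.iff_projective (P.complex.X 0)).2 (P.projective 0)
  obtain ⟨p, rfl⟩ : ∃ p, π p = m := (ModuleCat.epi_iff_surjective (P.π.f 0)).1 inferInstance m
  have hxp : x • p ∈ firstSyzygy P := (map_smul π x p).trans hm
  have hinj := (lTensor_quotient_injective_iff _ _).1
    ((subsingleton_tor_one_iff_lTensor_injective P _).1 h)
  -- As `Tor₁(R/x, M) = 0`, the syzygy `x • p` is `x • k` for a syzygy `k`.
  have hxp_mem : (⟨x • p, hxp⟩ : firstSyzygy P) ∈ Ideal.span {x} • (⊤ : Submodule R _) :=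
    hinj (Submodule.smul_mem_smul (Ideal.mem_span_singleton_self x) trivial)
  rw [Submodule.ideal_span_singleton_smul] at hxp_mem
  obtain ⟨k, -, hk⟩ := hxp_mem
  have hsub : x • (p - k) = 0 := by
    rw [smul_sub, sub_eq_zero]
    exact congrArg Subtype.val hk.symm
  have hπ : π (p - k) = π p := by rw [map_sub, show π k = 0 from k.2, sub_zero]
  exact hπ ▸ Submodule.smul_top_le_comap_smul_top _ π (mem_annihilator_smul_top_of_flat hsub)

end DerivedFunctors

section PhiRing

variable {R : Type u} [CommRing R] {x : R}

lemma isPhiTorsion_quotient {I : Ideal R} (hI : ¬ I ≤ nilradical R) : IsPhiTorsion R (R ⧸ I) :=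
  fun t ↦ ⟨I, hI, fun _ ha ↦ Module.mem_annihilator.1 (I.annihilator_quotient.symm ▸ ha) t⟩

lemma IsPhiRing.nilradical_le_span_singleton_mul (hR : IsPhiRing R) (hx : x ∉ nilradical R) :
    nilradical R ≤ Ideal.span {x} * nilradical R := fun n hn ↦ by
  obtain ⟨r, rfl⟩ := Ideal.mem_span_singleton.1 (hR.2 x hx hn)
  exact Ideal.mul_mem_mul (Ideal.mem_span_singleton_self x)
    ((hR.1.mem_or_mem hn).resolve_left hx)

lemma IsPhiRing.nilradical_smul_top_le (hR : IsPhiRing R) {Y : Type*} {T : Type u} [AddCommGroup Y]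
    [Module R Y] [AddCommGroup T] [Module R T] (hT : IsPhiTorsion R T) (π : Y →ₗ[R] T) :
    nilradical R • ⊤ ≤ nilradical R • LinearMap.ker π := by
  refine Submodule.smul_le.2 fun n hn y _ ↦ ?_
  obtain ⟨I, hI, hIy⟩ := hT (π y)
  obtain ⟨s, hsI, hs⟩ := SetLike.not_le_iff_exists.1 hI
  obtain ⟨r, hr, rfl⟩ := Ideal.mem_span_singleton_mul.1 (hR.nilradical_le_span_singleton_mul hs hn)
  rw [mul_comm, mul_smul]
  exact Submodule.smul_mem_smul hr (by rw [LinearMap.mem_ker, map_smul, hIy s hsI])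

lemma IsPhiRing.isNonnilInjective_characterModule (hR : IsPhiRing R) :
    IsNonnilInjective R (CharacterModule (R ⧸ nilradical R)) := fun T _ _ hT ↦ by
  refine (subsingleton_ext_one_iff_lcomp_surjective (projectiveResolution (ModuleCat.of R T)) _).2
    (rTensor_injective_iff_lcomp_surjective.1 ?_)
  rw [← LinearMap.lTensor_inj_iff_rTensor_inj, lTensor_quotient_injective_iff]
  exact fun y hy ↦ (Submodule.mem_smul_top_iff _ _ y).2 (hR.nilradical_smul_top_le hT _ hy)

lemma IsPhiFlat.mem_annihilator_smul_top {M : Type u} [AddCommGroup M] [Module R M]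
    (hM : IsPhiFlat R M) (hx : x ∉ nilradical R) {m : M} (hm : x • m = 0) :
    m ∈ ((Ideal.span {x}).annihilator • ⊤ : Submodule R M) :=
  mem_annihilator_smul_top_of_subsingleton_tor (M := ModuleCat.of R M)
    (hM _ (isPhiTorsion_quotient fun h ↦ hx (h (Ideal.mem_span_singleton_self x)))) hm

lemma isUnit_mk_nilradical_of_isPhiFlat_characterModule [(nilradical R).IsPrime]
    (hflat : IsPhiFlat R (CharacterModule (R ⧸ nilradical R))) (hx : x ∉ nilradical R) :
    IsUnit (Ideal.Quotient.mk (nilradical R) x) := by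
  have hann : (Ideal.span {x}).annihilator ≤ nilradical R := fun r hr ↦ by
    rw [Submodule.mem_annihilator_span_singleton, smul_eq_mul] at hr
    exact (Ideal.IsPrime.mem_or_mem ‹_› (hr ▸ zero_mem _)).resolve_right hx
  have hkill : nilradical R • (⊤ : Submodule R (CharacterModule (R ⧸ nilradical R))) = ⊥ := by
    rw [← Submodule.le_annihilator_iff, Submodule.annihilator_top]
    exact (nilradical R).annihilator_quotient.ge.trans annihilator_le_annihilator_characterModule
  have hinj : Function.Injective
      (CharacterModule.dual (LinearMap.lsmul R (R ⧸ nilradical R) x)) := by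
    refine (injective_iff_map_eq_zero _).2 fun c hc ↦ ?_
    rw [← Submodule.mem_bot R, ← hkill]
    exact Submodule.smul_mono_left hann (hflat.mem_annihilator_smul_top hx hc)
  obtain ⟨y, hy⟩ := CharacterModule.surjective_of_dual_injective _ hinj 1
  rw [LinearMap.lsmul_apply, Algebra.smul_def] at hy
  exact .of_mul_eq_one _ hy

lemma isUnit_of_isField_quotient_nilradical (hF : IsField (R ⧸ nilradical R))
    (hx : x ∉ nilradical R) : IsUnit x := by
  let := hF.toField
  have : IsLocalHom (Ideal.Quotient.mk (nilradical R)) :=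
    isLocalHom_of_le_jacobson_bot _ (Ideal.jacobson_bot (R := R) ▸ nilradical_le_jacobson R)
  exact isUnit_of_map_unit (Ideal.Quotient.mk (nilradical R)) x
    (IsUnit.mk0 _ (mt Ideal.Quotient.eq_zero_iff_mem.1 hx))

lemma IsPhiTorsion.subsingleton_of_isField {T : Type u} [AddCommGroup T] [Module R T]
    (hT : IsPhiTorsion R T) (hF : IsField (R ⧸ nilradical R)) : Subsingleton T := by
  refine subsingleton_of_forall_eq 0 fun t ↦ ?_
  obtain ⟨I, hI, hIt⟩ := hT t
  obtain ⟨s, hsI, hs⟩ := SetLike.not_le_iff_exists.1 hI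
  exact (isUnit_of_isField_quotient_nilradical hF hs).smul_eq_zero.1 (hIt s hsI)

end PhiRing

/-- A φ-ring `R` is a φ-IF ring if and only if `R/Nil(R)` is a
field. -/
theorem phiIF_iff_quotient_nilradical_isField (R : Type u) [CommRing R]
    (hR : IsPhiRing R) :
    (∀ (M : Type u) [AddCommGroup M] [Module R M],
        IsNonnilInjective R M → IsPhiFlat R M) ↔
      IsField (R ⧸ nilradical R) := by
  have := hR.1
  refine ⟨fun hIF ↦ ?_, fun hF M _ _ _ T _ _ hT ↦ ?_⟩
  · have hflat := hIF _ hR.isNonnilInjective_characterModule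
    refine ⟨exists_pair_ne _, mul_comm, fun {a} ha ↦ ?_⟩
    obtain ⟨x, rfl⟩ := Ideal.Quotient.mk_surjective a
    exact (isUnit_mk_nilradical_of_isPhiFlat_characterModule hflat
      (mt Ideal.Quotient.eq_zero_iff_mem.2 ha)).exists_right_inv
  · have := hT.subsingleton_of_isField hF
    exact subsingleton_tor_succ_of_subsingleton (ModuleCat.of R T) (ModuleCat.of R M) 0
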